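/- Let 1 < α ≤ 2, let V : ℤ → ℂ be absolutely summable, and let θ ∈ ℝ. Then for each j ∈ ℤ the convolution (c^α * V)_j = ∑_{l∈ℤ} c^α_l V_{j−l} converges absolutely, the family ((c^α * V)_j e^{−i j θ})_{j∈ℤ} is absolutely summable, and ∑_{j∈ℤ} (∑_{l∈ℤ} c^α_l V_{j−l}) e^{−i j θ} = |2 sin(θ/2)|^α · ∑_{j∈ℤ} V_j e^{−i j θ}. -/

import Mathlib

/-- Fractional centered-difference coefficients
`c^α_s = (-1)^s Γ(α+1) / (Γ(α/2 − s + 1) · Γ(α/2 + s + 1))`.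
(In Lean, division by zero is zero, matching the stated convention.) -/
noncomputable def cCoef (α : ℝ) (s : ℤ) : ℝ :=
  ((-1 : ℝ) ^ s) * Real.Gamma (α + 1) /
    (Real.Gamma (α / 2 - s + 1) * Real.Gamma (α / 2 + s + 1))

/-!
The symbol `w θ = |2 sin (θ / 2)| ^ α` satisfies `(1 - e^{-iθ}) w' = i (α / 2) (1 + e^{-iθ}) w`.
Integrated against `e^{-isθ}`, this gives the Fourier coefficients of `w` the two-term recurrence
`(α / 2 + s + 1) u (s + 1) = (s - α / 2) u s`, which `c^α` also satisfies by the functional equation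
of `Γ`; the mean value of `w` is a Beta integral, equal to `c^α_0` by the duplication formula. Hence
`c^α` is the sequence of Fourier coefficients of `w`. The recurrence makes `n |c^α_n|` telescope, so
that `c^α` is absolutely summable and `w` is the sum of its Fourier series. On absolutely summable
sequences the Fourier transform turns convolution into multiplication.
-/

open Complex intervalIntegral Set

section Convolution

variable {ι κ G R E : Type*} [NormedRing R] [NormedAddCommGroup E] [Module R E] [IsBoundedSMul R E]

lemma summable_norm_smul {f : ι → R} {g : κ → E} (hf : Summable fun i => ‖f i‖)
    (hg : Summable fun k => ‖g k‖) : Summable fun p : ι × κ => ‖f p.1 • g p.2‖ :=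
  .of_nonneg_of_le (fun _ => norm_nonneg _) (fun p => norm_smul_le (f p.1) (g p.2))
    (hf.mul_of_nonneg hg (fun _ => norm_nonneg _) fun _ => norm_nonneg _)

variable [AddGroup G] {f : G → R} {g : G → E}

/-- The change of variables `(j, l) ↦ (l, j - l)`, which turns a double series of convolution type
into a product series. -/
def convolutionEquiv (G : Type*) [AddGroup G] : G × G ≃ G × G :=
  (Equiv.prodComm G G).trans (Equiv.prodShear (Equiv.refl G) Equiv.subRight)

lemma convolutionEquiv_apply (p : G × G) : convolutionEquiv G p = (p.2, p.1 - p.2) := rfl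

lemma summable_norm_smul_sub_prod (hf : Summable fun l => ‖f l‖) (hg : Summable fun l => ‖g l‖) :
    Summable fun p : G × G => ‖f p.2 • g (p.1 - p.2)‖ := by
  simpa only [Function.comp_def, convolutionEquiv_apply] using
    (summable_norm_smul hf hg).comp_injective (convolutionEquiv G).injective

lemma summable_norm_smul_sub (hf : Summable fun l => ‖f l‖) (hg : Summable fun l => ‖g l‖) (j : G) :
    Summable fun l => ‖f l • g (j - l)‖ :=
  (summable_norm_smul_sub_prod hf hg).prod_factor j

lemma summable_norm_tsum_smul_sub (hf : Summable fun l => ‖f l‖) (hg : Summable fun l => ‖g l‖) :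
    Summable fun j => ‖∑' l, f l • g (j - l)‖ :=
  .of_nonneg_of_le (fun _ => norm_nonneg _)
    (fun j => norm_tsum_le_tsum_norm (summable_norm_smul_sub hf hg j))
    (summable_norm_smul_sub_prod hf hg).prod

lemma tsum_tsum_smul_sub [CompleteSpace R] [CompleteSpace E] (hf : Summable fun l => ‖f l‖)
    (hg : Summable fun l => ‖g l‖) :
    ∑' j, ∑' l, f l • g (j - l) = (∑' l, f l) • ∑' l, g l := by
  rw [tsum_smul_tsum hf.of_norm hg.of_norm (summable_norm_smul hf hg).of_norm,
    ← (convolutionEquiv G).tsum_eq, ← (summable_norm_smul_sub_prod hf hg).of_norm.tsum_prod]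
  simp only [convolutionEquiv_apply]

end Convolution

section Recurrence

lemma eq_of_two_term_recurrence {K : Type*} [Mul K] [Zero K] [IsLeftCancelMulZero K]
    {p q u v : ℤ → K} (hp : ∀ s, 0 ≤ s → p s ≠ 0) (hq : ∀ s, s < 0 → q s ≠ 0)
    (hu : ∀ s, p s * u (s + 1) = q s * u s) (hv : ∀ s, p s * v (s + 1) = q s * v s)
    (h0 : u 0 = v 0) : u = v := by
  funext s
  induction s using Int.induction_on with
  | zero => exact h0
  | succ n ih =>
    apply mul_left_cancel₀ (hp n n.cast_nonneg)
    rw [hu, hv, ih]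
  | pred n ih =>
    apply mul_left_cancel₀ (hq (-n - 1) (by lia))
    rw [← hu, ← hv, sub_add_cancel, ih]

lemma summable_of_le_sub_succ {u A : ℕ → ℝ} (hu : ∀ n, 0 ≤ u n) (hA : ∀ n, 0 ≤ A n)
    (h : ∀ n, u n ≤ A n - A (n + 1)) : Summable u :=
  summable_of_sum_range_le (c := A 0) hu fun n => calc
    ∑ i ∈ Finset.range n, u i ≤ ∑ i ∈ Finset.range n, (A i - A (i + 1)) :=
      Finset.sum_le_sum fun i _ => h i
    _ = A 0 - A n := Finset.sum_range_sub' A n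
    _ ≤ A 0 := sub_le_self _ (hA n)

lemma summable_abs_of_two_term_recurrence {b : ℝ} (hb : 0 < b) {u : ℕ → ℝ}
    (hu : ∀ n : ℕ, (b + n + 1) * u (n + 1) = (n - b) * u n) : Summable fun n => |u n| := by
  have telescope (n : ℕ) (hn : b ≤ n) :
      |u n| ≤ n * |u n| / b - (n + 1 : ℕ) * |u (n + 1)| / b := by
    have habs : (b + n + 1) * |u (n + 1)| = (n - b) * |u n| := by
      rw [← abs_of_nonneg (by positivity : 0 ≤ b + n + 1), ← abs_of_nonneg (sub_nonneg.mpr hn),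
        ← abs_mul, ← abs_mul, hu]
    have : 0 ≤ b * |u (n + 1)| := by positivity
    rw [← sub_div, le_div_iff₀ hb]
    push_cast
    linarith
  rw [← summable_nat_add_iff ⌈b⌉₊]
  refine summable_of_le_sub_succ (A := fun n => (n + ⌈b⌉₊ : ℕ) * |u (n + ⌈b⌉₊)| / b)
    (fun _ => abs_nonneg _) (fun _ => by positivity) fun n => ?_
  rw [Nat.add_right_comm]
  exact telescope _ ((Nat.le_ceil b).trans (by simp))

end Recurrence

section Coefficients

lemma cCoef_succ (α : ℝ) (s : ℤ) :
    (α / 2 + s + 1) * cCoef α (s + 1) = (s - α / 2) * cCoef α s := by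
  have hsub : α / 2 - (s + 1 : ℤ) + 1 = α / 2 - s := by push_cast; ring
  have hadd : α / 2 + (s + 1 : ℤ) + 1 = α / 2 + s + 1 + 1 := by push_cast; ring
  rw [cCoef, cCoef, hsub, hadd, zpow_add_one₀ (by norm_num), ← neg_sub (α / 2)]
  -- Where `Γ (x + 1) = x Γ x` fails, both sides vanish because `Real.Gamma 0 = 0`.
  rcases eq_or_ne (α / 2 - s) 0 with h | hp
  · simp [h, Real.Gamma_zero]
  rcases eq_or_ne (α / 2 + s + 1) 0 with h | hq
  · simp [h, Real.Gamma_zero]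
  rw [Real.Gamma_add_one hp, Real.Gamma_add_one hq]
  generalize α / 2 - s = p at *
  generalize α / 2 + s + 1 = q at *
  field_simp

lemma cCoef_neg (α : ℝ) (s : ℤ) : cCoef α (-s) = cCoef α s := by
  simp only [cCoef, zpow_neg, ← inv_zpow, inv_neg_one, Int.cast_neg, sub_neg_eq_add,
    ← sub_eq_add_neg, mul_comm (Real.Gamma (α / 2 - s + 1))]

lemma cCoef_zero (α : ℝ) : cCoef α 0 = Real.Gamma (α + 1) / Real.Gamma (α / 2 + 1) ^ 2 := by
  simp [cCoef, sq]

lemma summable_abs_cCoef {α : ℝ} (hα : 0 < α) : Summable fun s : ℤ => |cCoef α s| := by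
  have h : Summable fun n : ℕ => |cCoef α n| :=
    summable_abs_of_two_term_recurrence (half_pos hα) fun n => by simpa using cCoef_succ α n
  exact .of_nat_of_neg h (by simpa only [cCoef_neg] using h)

end Coefficients

section SineIntegral

lemma integral_rpow_mul_one_sub_rpow {u v : ℝ} (hu : 0 < u) (hv : 0 < v) :
    ∫ x in (0 : ℝ)..1, x ^ (u - 1) * (1 - x) ^ (v - 1) = ProbabilityTheory.beta u v := by
  have hcast : betaIntegral u v =
      ((∫ x in (0 : ℝ)..1, x ^ (u - 1) * (1 - x) ^ (v - 1) : ℝ) : ℂ) := by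
    rw [← integral_ofReal, betaIntegral]
    refine integral_congr fun x hx => ?_
    rw [uIcc_of_le zero_le_one] at hx
    simp [ofReal_cpow hx.1, ofReal_cpow (sub_nonneg.mpr hx.2)]
  rw [ProbabilityTheory.beta_eq_betaIntegralReal u v hu hv, hcast, ofReal_re]

lemma integral_two_mul_sin_rpow_eq_beta {a : ℝ} (ha : -1 < a) :
    ∫ x in (0 : ℝ)..Real.pi, (2 * Real.sin x) ^ a =
      4 ^ a * ProbabilityTheory.beta ((a + 1) / 2) ((a + 1) / 2) := by
  -- Substitute `t = (1 - cos x) / 2`, for which `t (1 - t) = (sin x / 2) ^ 2`.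
  have hsubst := integral_comp_mul_deriv_of_deriv_nonneg (a := 0) (b := Real.pi)
    (f := fun x => (1 - Real.cos x) / 2) (f' := fun x => Real.sin x / 2)
    (g := fun t => t ^ ((a + 1) / 2 - 1) * (1 - t) ^ ((a + 1) / 2 - 1))
    (by fun_prop)
    (fun x _ => by simpa using ((Real.hasDerivAt_cos x).const_sub 1).div_const 2)
    (fun x hx => by
      rw [min_eq_left Real.pi_pos.le, max_eq_right Real.pi_pos.le] at hx
      exact div_nonneg (Real.sin_nonneg_of_mem_Icc ⟨hx.1.le, hx.2.le⟩) zero_le_two)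
  simp only [Real.cos_zero, Real.cos_pi, sub_self, zero_div, sub_neg_eq_add, one_add_one_eq_two,
    div_self (two_ne_zero' ℝ)] at hsubst
  rw [← integral_rpow_mul_one_sub_rpow (by linarith) (by linarith), ← hsubst, ← integral_const_mul]
  refine integral_congr_Ioo_of_le Real.pi_pos.le fun x hx => ?_
  have hsin : 0 < Real.sin x / 2 := half_pos (Real.sin_pos_of_mem_Ioo hx)
  have hsq : (1 - Real.cos x) / 2 * (1 - (1 - Real.cos x) / 2) = (Real.sin x / 2) ^ (2 : ℝ) := by
    rw [Real.rpow_two]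
    linear_combination (-1 / 4) * Real.sin_sq_add_cos_sq x
  simp only [Function.comp_apply]
  rw [← Real.mul_rpow (by linarith [Real.cos_le_one x]) (by linarith [Real.neg_one_le_cos x]), hsq,
    ← Real.rpow_mul hsin.le, show 2 * ((a + 1) / 2 - 1) = a - 1 by ring, Real.rpow_sub_one hsin.ne',
    div_mul_cancel₀ _ hsin.ne', ← Real.mul_rpow (by norm_num) hsin.le]
  ring_nf

lemma integral_two_mul_sin_rpow {a : ℝ} (ha : -1 < a) :
    ∫ x in (0 : ℝ)..Real.pi, (2 * Real.sin x) ^ a =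
      Real.pi * (Real.Gamma (a + 1) / Real.Gamma (a / 2 + 1) ^ 2) := by
  have hΓ : 0 < Real.Gamma (a + 1) := Real.Gamma_pos_of_pos (by linarith)
  have hΓ' : 0 < Real.Gamma (a / 2 + 1) := Real.Gamma_pos_of_pos (by linarith)
  have hduplication : 2 ^ a * Real.Gamma ((a + 1) / 2) =
      Real.Gamma (a + 1) * √Real.pi / Real.Gamma (a / 2 + 1) := by
    have h := Real.Gamma_mul_Gamma_add_half ((a + 1) / 2)
    rw [show (a + 1) / 2 + 1 / 2 = a / 2 + 1 by ring, show 2 * ((a + 1) / 2) = a + 1 by ring,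
      show 1 - (a + 1) = -a by ring, Real.rpow_neg zero_le_two] at h
    rw [eq_div_iff hΓ'.ne', mul_assoc, h]
    field_simp
  calc ∫ x in (0 : ℝ)..Real.pi, (2 * Real.sin x) ^ a
    _ = (2 ^ a * Real.Gamma ((a + 1) / 2)) ^ 2 / Real.Gamma (a + 1) := by
      rw [integral_two_mul_sin_rpow_eq_beta ha, ProbabilityTheory.beta, add_halves,
        show (4 : ℝ) = 2 * 2 by norm_num, Real.mul_rpow zero_le_two zero_le_two]
      ring
    _ = Real.pi * (Real.Gamma (a + 1) / Real.Gamma (a / 2 + 1) ^ 2) := by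
      rw [hduplication, div_pow, mul_pow, Real.sq_sqrt Real.pi_pos.le]
      field_simp

end SineIntegral

section FourierSeries

lemma hasSum_fourierCoeffOn_of_periodic {T : ℝ} (hT : 0 < T) {f : ℝ → ℂ} (hf : Continuous f)
    (hper : f.Periodic T) (hsum : Summable (fourierCoeffOn hT f)) (x : ℝ) :
    HasSum (fun n => fourierCoeffOn hT f n * exp (2 * Real.pi * I * n * x / T)) (f x) := by
  have : Fact (0 < T) := ⟨hT⟩
  let F : C(AddCircle T, ℂ) := ⟨hper.lift, continuous_coinduced_dom.mpr hf⟩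
  have hcoeff : fourierCoeff F = fourierCoeffOn hT f := by
    funext n
    rw [fourierCoeff_eq_intervalIntegral F n 0, fourierCoeffOn_eq_integral, zero_add]
    simp only [fourier_coe_apply, sub_zero]
    rfl
  have h := has_pointwise_sum_fourier_series_of_summable (hcoeff ▸ hsum) (x : AddCircle T)
  simpa only [hcoeff, fourier_coe_apply, smul_eq_mul] using! h

lemma fourierCoeffOn_two_pi (f : ℝ → ℂ) (n : ℤ) :
    fourierCoeffOn Real.two_pi_pos f n =
      (2 * Real.pi : ℂ)⁻¹ * ∫ x in (0 : ℝ)..2 * Real.pi, exp (-I * n * x) * f x := by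
  have hpi : (Real.pi : ℂ) ≠ 0 := ofReal_ne_zero.mpr Real.pi_ne_zero
  have hexp (x : ℝ) : 2 * Real.pi * I * (-n : ℤ) * x / (2 * Real.pi - 0 : ℝ) = -I * n * x := by
    push_cast
    field_simp
    ring
  rw [fourierCoeffOn_eq_integral]
  simp only [fourier_coe_apply, hexp, smul_eq_mul, real_smul]
  push_cast
  simp

end FourierSeries

section Symbol

/-- The symbol `|2 sin (θ / 2)| ^ α` of the fractional centered difference operator of order `α`,
that is, the Fourier multiplier by which this operator acts. -/
noncomputable def centeredDiffSymbol (α θ : ℝ) : ℝ :=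
  |2 * Real.sin (θ / 2)| ^ α

variable {α : ℝ}

lemma continuous_centeredDiffSymbol (hα : 0 ≤ α) : Continuous (centeredDiffSymbol α) :=
  Continuous.rpow_const (by fun_prop) fun _ => Or.inr hα

lemma centeredDiffSymbol_periodic (α : ℝ) :
    Function.Periodic (centeredDiffSymbol α) (2 * Real.pi) := fun θ => by
  simp only [centeredDiffSymbol, add_div, mul_div_cancel_left₀ Real.pi two_ne_zero,
    Real.sin_add_pi, mul_neg, abs_neg]

lemma centeredDiffSymbol_neg (α θ : ℝ) : centeredDiffSymbol α (-θ) = centeredDiffSymbol α θ := by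
  simp only [centeredDiffSymbol, neg_div, Real.sin_neg, mul_neg, abs_neg]

lemma centeredDiffSymbol_zero (hα : α ≠ 0) : centeredDiffSymbol α 0 = 0 := by
  simp [centeredDiffSymbol, Real.zero_rpow hα]

lemma hasDerivAt_abs_rpow_of_ne_zero (p : ℝ) {x : ℝ} (hx : x ≠ 0) :
    HasDerivAt (fun x : ℝ => |x| ^ p) (p * |x| ^ p / x) x := by
  refine ((hasDerivAt_abs hx).rpow_const (Or.inl (abs_ne_zero.mpr hx))).congr_deriv ?_
  rw [Real.rpow_sub_one (abs_ne_zero.mpr hx)]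
  field_simp
  rw [mul_right_comm, sign_mul_self, mul_comm]

lemma hasDerivAt_centeredDiffSymbol (α : ℝ) {θ : ℝ} (hθ : Real.sin (θ / 2) ≠ 0) :
    HasDerivAt (centeredDiffSymbol α)
      (α / 2 * (Real.cos (θ / 2) / Real.sin (θ / 2)) * centeredDiffSymbol α θ) θ := by
  have hsin : HasDerivAt (fun θ => 2 * Real.sin (θ / 2)) (Real.cos (θ / 2)) θ :=
    ((((hasDerivAt_id' θ).div_const 2).sin).const_mul 2).congr_deriv (by ring)
  have habs := hasDerivAt_abs_rpow_of_ne_zero α (mul_ne_zero two_ne_zero hθ)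
  refine (habs.comp θ hsin).congr_deriv ?_
  rw [centeredDiffSymbol]
  field_simp

lemma cos_mul_one_sub_exp (z : ℂ) :
    cos z * (1 - exp (-I * (2 * z))) = I * sin z * (1 + exp (-I * (2 * z))) := by
  have hexp : exp (-I * (2 * z)) = (cos z - I * sin z) ^ 2 := by
    rw [show -I * (2 * z) = (2 : ℕ) * (-z * I) by push_cast; ring, exp_nat_mul, exp_mul_I, cos_neg,
      sin_neg]
    ring
  rw [hexp]
  linear_combination (-cos z + I * sin z) * sin_sq_add_cos_sq z +
    (cos z * sin z ^ 2 - I * sin z ^ 3) * I_sq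

lemma hasDerivAt_exp_mul_ofReal (c : ℂ) (θ : ℝ) :
    HasDerivAt (fun θ : ℝ => exp (c * θ)) (exp (c * θ) * c) θ := by
  simpa using ((hasDerivAt_id θ).ofReal_comp.const_mul c).cexp

lemma exp_neg_I_mul_add (s t : ℤ) (θ : ℝ) :
    exp (-I * (s + t : ℤ) * θ) = exp (-I * s * θ) * exp (-I * t * θ) := by
  rw [← exp_add]
  push_cast
  ring_nf

lemma norm_exp_neg_I_mul (s : ℤ) (θ : ℝ) : ‖exp (-I * s * θ)‖ = 1 := by
  simp [norm_exp]

lemma hasDerivAt_exp_sub_exp_mul_centeredDiffSymbol (α : ℝ) (s : ℤ) {θ : ℝ}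
    (hθ : Real.sin (θ / 2) ≠ 0) :
    HasDerivAt
      (fun θ : ℝ => (exp (-I * s * θ) - exp (-I * (s + 1 : ℤ) * θ)) * (centeredDiffSymbol α θ : ℂ))
      (I * ((α / 2 + s + 1) * (exp (-I * (s + 1 : ℤ) * θ) * centeredDiffSymbol α θ) -
        (s - α / 2) * (exp (-I * s * θ) * centeredDiffSymbol α θ))) θ := by
  refine (((hasDerivAt_exp_mul_ofReal (-I * s) θ).sub
    (hasDerivAt_exp_mul_ofReal (-I * (s + 1 : ℤ)) θ)).mul
    (hasDerivAt_centeredDiffSymbol α hθ).ofReal_comp).congr_deriv ?_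
  have hsin : sin (θ / 2 : ℂ) ≠ 0 := by exact_mod_cast ofReal_ne_zero.mpr hθ
  have hcot : cos (θ / 2 : ℂ) / sin (θ / 2) * (1 - exp (-I * θ)) = I * (1 + exp (-I * θ)) := by
    have h := cos_mul_one_sub_exp (θ / 2)
    rw [mul_div_cancel₀ _ two_ne_zero] at h
    rw [div_mul_eq_mul_div, h]
    field_simp
  have hexp := exp_neg_I_mul_add s 1 θ
  rw [Int.cast_one, mul_one] at hexp
  rw [Pi.sub_apply, hexp]
  push_cast
  linear_combination (α / 2 * exp (-I * s * θ) * centeredDiffSymbol α θ) * hcot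

lemma fourierCoeffOn_centeredDiffSymbol_succ (hα : 0 < α) (s : ℤ) :
    (α / 2 + s + 1 : ℂ) *
        fourierCoeffOn Real.two_pi_pos (fun θ => (centeredDiffSymbol α θ : ℂ)) (s + 1) =
      (s - α / 2) * fourierCoeffOn Real.two_pi_pos (fun θ => (centeredDiffSymbol α θ : ℂ)) s := by
  have hcont : Continuous fun θ : ℝ => (centeredDiffSymbol α θ : ℂ) :=
    continuous_ofReal.comp (continuous_centeredDiffSymbol hα.le)
  have hint (k : ℤ) (c : ℂ) : IntervalIntegrable
      (fun θ : ℝ => c * (exp (-I * k * θ) * centeredDiffSymbol α θ)) MeasureTheory.volume 0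
      (2 * Real.pi) :=
    Continuous.intervalIntegrable (by fun_prop) _ _
  have hFTC := integral_eq_sub_of_hasDerivAt_of_le Real.two_pi_pos.le
    (Continuous.continuousOn (by fun_prop))
    (fun θ hθ => hasDerivAt_exp_sub_exp_mul_centeredDiffSymbol α s
      (Real.sin_pos_of_pos_of_lt_pi (by linarith [hθ.1]) (by linarith [hθ.2])).ne')
    (((hint _ _).sub (hint _ _)).const_mul I)
  have hzero : centeredDiffSymbol α 0 = 0 := centeredDiffSymbol_zero hα.ne'
  have htwo_pi : centeredDiffSymbol α (2 * Real.pi) = 0 :=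
    (centeredDiffSymbol_periodic α).eq.trans hzero
  rw [integral_const_mul, integral_sub (hint _ _) (hint _ _), integral_const_mul,
    integral_const_mul, htwo_pi, hzero, ofReal_zero, mul_zero, mul_zero, sub_zero, mul_eq_zero,
    or_iff_right I_ne_zero, sub_eq_zero] at hFTC
  rw [fourierCoeffOn_two_pi, fourierCoeffOn_two_pi]
  linear_combination (2 * Real.pi : ℂ)⁻¹ * hFTC

lemma fourierCoeffOn_centeredDiffSymbol_zero (hα : -1 < α) :
    fourierCoeffOn Real.two_pi_pos (fun θ => (centeredDiffSymbol α θ : ℂ)) 0 = cCoef α 0 := by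
  have hint : ∫ θ in (0 : ℝ)..2 * Real.pi, centeredDiffSymbol α θ =
      2 * (Real.pi * cCoef α 0) := calc
    _ = ∫ θ in (0 : ℝ)..2 * Real.pi, (2 * Real.sin (θ / 2)) ^ α := by
      refine integral_congr_Ioo_of_le Real.two_pi_pos.le fun θ hθ => ?_
      have : 0 < Real.sin (θ / 2) :=
        Real.sin_pos_of_pos_of_lt_pi (by linarith [hθ.1]) (by linarith [hθ.2])
      simp only [centeredDiffSymbol, abs_of_pos (mul_pos two_pos this)]
    _ = 2 * (Real.pi * cCoef α 0) := by
      rw [integral_comp_div (fun x => (2 * Real.sin x) ^ α) two_ne_zero, zero_div,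
        mul_div_cancel_left₀ _ two_ne_zero, integral_two_mul_sin_rpow hα, cCoef_zero, smul_eq_mul]
  have hpi : (Real.pi : ℂ) ≠ 0 := ofReal_ne_zero.mpr Real.pi_ne_zero
  simp only [fourierCoeffOn_two_pi, Int.cast_zero, mul_zero, zero_mul, exp_zero, one_mul]
  rw [integral_ofReal, hint]
  push_cast
  field_simp

lemma fourierCoeffOn_centeredDiffSymbol (hα : 0 < α) :
    fourierCoeffOn Real.two_pi_pos (fun θ => (centeredDiffSymbol α θ : ℂ)) =
      fun s => (cCoef α s : ℂ) := by
  refine eq_of_two_term_recurrence (p := fun s => (α / 2 + s + 1 : ℂ)) (q := fun s => s - α / 2)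
    (fun s hs => ?_) (fun s hs => ?_) (fourierCoeffOn_centeredDiffSymbol_succ hα)
    (fun s => by exact_mod_cast cCoef_succ α s)
    (fourierCoeffOn_centeredDiffSymbol_zero (by linarith))
  · have : 0 < α / 2 + s + 1 := by positivity
    exact_mod_cast this.ne'
  · have : s - α / 2 < 0 := by linarith [(Int.cast_lt_zero (R := ℝ)).mpr hs]
    exact_mod_cast this.ne

lemma hasSum_cCoef_mul_exp (hα : 0 < α) (θ : ℝ) :
    HasSum (fun s : ℤ => (cCoef α s : ℂ) * exp (-I * s * θ)) (centeredDiffSymbol α θ) := by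
  have hsum : Summable (fourierCoeffOn Real.two_pi_pos fun θ => (centeredDiffSymbol α θ : ℂ)) := by
    rw [fourierCoeffOn_centeredDiffSymbol hα]
    exact .of_norm (by simpa using summable_abs_cCoef hα)
  have h := hasSum_fourierCoeffOn_of_periodic Real.two_pi_pos
    (f := fun θ => (centeredDiffSymbol α θ : ℂ))
    (continuous_ofReal.comp (continuous_centeredDiffSymbol hα.le))
    ((centeredDiffSymbol_periodic α).comp ofReal) hsum (-θ)
  have hexp (s : ℤ) : 2 * Real.pi * I * s * (-θ : ℝ) / (2 * Real.pi : ℝ) = -I * s * θ := by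
    have hpi : (Real.pi : ℂ) ≠ 0 := ofReal_ne_zero.mpr Real.pi_ne_zero
    push_cast
    field_simp
  simpa only [fourierCoeffOn_centeredDiffSymbol hα, hexp, centeredDiffSymbol_neg]
    using h

end Symbol

theorem fourier_diagonalizes_fractional_difference_general {E : Type*} [NormedAddCommGroup E]
    [NormedSpace ℂ E] [CompleteSpace E] {α : ℝ} (hα : 0 < α) {V : ℤ → E}
    (hV : Summable fun l => ‖V l‖) (θ : ℝ) :
    (∀ j : ℤ, Summable fun l : ℤ => ‖(cCoef α l : ℂ) • V (j - l)‖) ∧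
    (Summable fun j : ℤ => ‖exp (-I * j * θ) • ∑' l : ℤ, (cCoef α l : ℂ) • V (j - l)‖) ∧
    ∑' j : ℤ, exp (-I * j * θ) • ∑' l : ℤ, (cCoef α l : ℂ) • V (j - l) =
      (centeredDiffSymbol α θ : ℂ) • ∑' j : ℤ, exp (-I * j * θ) • V j := by
  have hc : Summable fun l : ℤ => ‖(cCoef α l : ℂ)‖ := by simpa using summable_abs_cCoef hα
  have hc_exp : Summable fun l : ℤ => ‖(cCoef α l : ℂ) * exp (-I * l * θ)‖ := by
    simpa only [norm_mul, norm_exp_neg_I_mul, mul_one] using hc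
  have hV_exp : Summable fun l : ℤ => ‖exp (-I * l * θ) • V l‖ := by
    simpa only [norm_smul, norm_exp_neg_I_mul, one_mul] using hV
  have hmodulate (j l : ℤ) : exp (-I * j * θ) • (cCoef α l : ℂ) • V (j - l) =
      ((cCoef α l : ℂ) * exp (-I * l * θ)) • exp (-I * (j - l : ℤ) * θ) • V (j - l) := by
    rw [smul_smul, smul_smul, mul_assoc (cCoef α l : ℂ), ← exp_neg_I_mul_add, add_sub_cancel,
      mul_comm]
  refine ⟨summable_norm_smul_sub hc hV, ?_, ?_⟩
  · simpa only [norm_smul, norm_exp_neg_I_mul, one_mul] using summable_norm_tsum_smul_sub hc hV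
  · simp_rw [← tsum_const_smul'' (exp _), hmodulate]
    rw [tsum_tsum_smul_sub hc_exp hV_exp, (hasSum_cCoef_mul_exp hα θ).tsum_eq]

/-- The semi-discrete Fourier transform diagonalizes the fractional centered
difference operator: for `1 < α ≤ 2`, an absolutely summable `V : ℤ → ℂ` and
`θ ∈ ℝ`, the convolution `(c^α * V)_j = ∑_l c^α_l V_{j−l}` converges absolutely
for each `j`, the family `((c^α * V)_j e^{−ijθ})_j` is absolutely summable, and
`∑_j (c^α * V)_j e^{−ijθ} = |2 sin(θ/2)|^α ∑_j V_j e^{−ijθ}`. -/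
theorem fourier_diagonalizes_fractional_difference
    (α : ℝ) (hα₁ : 1 < α) (hα₂ : α ≤ 2)
    (V : ℤ → ℂ) (hV : Summable fun l : ℤ => ‖V l‖) (θ : ℝ) :
    (∀ j : ℤ, Summable fun l : ℤ => ‖(cCoef α l : ℂ) * V (j - l)‖) ∧
    (Summable fun j : ℤ =>
      ‖(∑' l : ℤ, (cCoef α l : ℂ) * V (j - l)) * Complex.exp (-Complex.I * j * θ)‖) ∧
    (∑' j : ℤ, (∑' l : ℤ, (cCoef α l : ℂ) * V (j - l)) * Complex.exp (-Complex.I * j * θ)) =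
      ((|2 * Real.sin (θ / 2)| ^ α : ℝ) : ℂ) *
        ∑' j : ℤ, V j * Complex.exp (-Complex.I * j * θ) := by
  simpa only [smul_eq_mul, mul_comm (exp _), centeredDiffSymbol] using
    fourier_diagonalizes_fractional_difference_general (zero_lt_one.trans hα₁) hV θ
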